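/- Under the 2-group SBM with observation errors with q ∈ (0,1) and β̄ ∈ (0,1) a fixed tuning parameter, define, on the event Y ≠ Y*, the statistics Q_{n,β̄}(b) = (n(β̂_b − b), √n γ̂_1, √n γ̂_2)ᵀ Θ̂_β (n(β̂_b − b), √n γ̂_1, √n γ̂_2) and Q_{n,μ} = n (γ̂_1, γ̂_2, μ̂_1, μ̂_2)ᵀ Θ̂_μ (γ̂_1, γ̂_2, μ̂_1, μ̂_2), where Θ̂_β and Θ̂_μ are consistent (in operator norm) estimators of the corresponding asymptotic precision matrices Σ_β^{−1} and Σ_μ^{−1}. Define the test function Ψ_α(Y, Y*, c) = 1{Y ≠ Y*} · 1{min_{b ∈ [0, β̄]} Q_{n,β̄}(b) > c^{(3)}_α} · 1{Q_{n,μ} > c^{(4)}_α}, where c^{(ν)}_α is the (1 − α)-quantile of the chi-squared distribution with ν degrees of freedom. Then for every parameter configuration in the null set H_{0,β̄} = {γ_1 = γ_2 = 0, β ∈ [0, β̄]} ∪ {γ_1 = γ_2 = 0, μ_1 = μ_2 = 0}, the test asymptotically controls the type I error at level α: limsup_{n→∞} P(Ψ_α(Y, Y*, c) = 1) ≤ α.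 -/

import Mathlib

/-!
STATEMENT 17: Asymptotic level-α control of the intersection–union test for
systematic bias under the 2-group SBM with observation errors.  On the event
Y ≠ Y*, Q_{n,β̄}(b) and Q_{n,μ} are quadratic forms in the statistics
(n(β̂_b − b), √n γ̂₁, √n γ̂₂) resp. √n(γ̂₁, γ̂₂, μ̂₁, μ̂₂), built from
consistent estimators Θ̂_β, Θ̂_μ of the asymptotic precision matrices
Σ_β⁻¹, Σ_μ⁻¹ (the limiting covariances being characterized by the Cramér–Wold
property, valid when β ∈ (0,1)).  The test rejects when Y ≠ Y*,
min_{b ∈ [0,β̄]} Q_{n,β̄}(b) > c⁽³⁾_α and Q_{n,μ} > c⁽⁴⁾_α, where c⁽ᵛ⁾_α is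
the (1−α)-quantile of χ²(ν).  For every parameter configuration in the null
set H₀,β̄ = {γ₁ = γ₂ = 0, β ∈ [0,β̄]} ∪ {γ₁ = γ₂ = 0, μ₁ = μ₂ = 0}, the
asymptotic type I error is at most α.  The model hypothesis holds for all
large n.
-/

open MeasureTheory ProbabilityTheory Filter Finset

noncomputable section

/-- Mass of a label configuration: i.i.d. labels, `true` (minority) w.p. κ. -/
def labelMass (κ : ℝ) {n : ℕ} (l : Fin n → Bool) : ℝ :=
  ∏ i, (if l i then κ else 1 - κ)

/-- Conditional mass of an adjacency configuration given labels:
independent Bernoulli edges with success probability `B (l i) (l j)`, i < j. -/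
def edgeMass {n : ℕ} (B : Bool → Bool → ℝ) (l : Fin n → Bool)
    (a : Fin n → Fin n → Bool) : ℝ :=
  ∏ p ∈ Finset.univ.filter (fun p : Fin n × Fin n => p.1 < p.2),
    (if a p.1 p.2 then B (l p.1) (l p.2) else 1 - B (l p.1) (l p.2))

/-- Conditional mass of an observed network `y` given the construct network
`a` and the labels: each present edge of `a` is kept independently with
probability `1 − βm (l i) (l j)` (type II error rate `βm`), and no edges are
added. -/
def obsMass {n : ℕ} (βm : Bool → Bool → ℝ) (l : Fin n → Bool)
    (a y : Fin n → Fin n → Bool) : ℝ :=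
  ∏ p ∈ Finset.univ.filter (fun p : Fin n × Fin n => p.1 < p.2),
    (if a p.1 p.2 then
      (if y p.1 p.2 then 1 - βm (l p.1) (l p.2) else βm (l p.1) (l p.2))
     else (if y p.1 p.2 then 0 else 1))

/-- The symmetric 2×2 matrix with within-group values `x₁` (group 1 = `true`),
`x₂` (group 2 = `false`) and between-group value `xb`. -/
def sbmB (x₁ x₂ xb : ℝ) : Bool → Bool → ℝ :=
  fun x y => if x then (if y then x₁ else xb) else (if y then xb else x₂)

/-- `(P, c, A, Y, Y')` is a 2-group SBM with connectivity matrix `B` and two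
conditionally independent noisy replicates `Y`, `Y'` with group-dependent
type II error rates `βm`.  The joint law is specified by its probability
mass function. -/
structure IsObsSBM {Ω : Type*} [MeasurableSpace Ω] (P : Measure Ω) (n : ℕ)
    (B βm : Bool → Bool → ℝ) (κ : ℝ)
    (c : Ω → Fin n → Bool) (A Y Y' : Ω → Fin n → Fin n → Bool) : Prop where
  isProb : IsProbabilityMeasure P
  symmA : ∀ ω i j, A ω i j = A ω j i
  looplessA : ∀ ω i, A ω i i = false
  symmY : ∀ ω i j, Y ω i j = Y ω j i
  looplessY : ∀ ω i, Y ω i i = false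
  symmY' : ∀ ω i j, Y' ω i j = Y' ω j i
  looplessY' : ∀ ω i, Y' ω i i = false
  law : ∀ (l : Fin n → Bool) (a y y' : Fin n → Fin n → Bool),
    (∀ i j, a i j = a j i) → (∀ i, a i i = false) →
    (∀ i j, y i j = y j i) → (∀ i, y i i = false) →
    (∀ i j, y' i j = y' j i) → (∀ i, y' i i = false) →
    P {ω | c ω = l ∧ A ω = a ∧ Y ω = y ∧ Y' ω = y'}
      = ENNReal.ofReal (labelMass κ l * edgeMass B l a *
          obsMass βm l a y * obsMass βm l a y')

/-- Number of unordered pairs `i < j` selected by `sel`. -/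
def pairCard {n : ℕ} (sel : Fin n → Fin n → Bool) : ℝ :=
  ((Finset.univ.filter
      (fun p : Fin n × Fin n => p.1 < p.2 ∧ sel p.1 p.2 = true)).card : ℝ)

/-- Pairs within group 1. -/
def within1 {n : ℕ} (c : Fin n → Bool) : Fin n → Fin n → Bool :=
  fun i j => c i && c j

/-- Pairs within group 2. -/
def within2 {n : ℕ} (c : Fin n → Bool) : Fin n → Fin n → Bool :=
  fun i j => !(c i) && !(c j)

/-- Between-group pairs. -/
def between {n : ℕ} (c : Fin n → Bool) : Fin n → Fin n → Bool :=
  fun i j => c i != c j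

/-- `û₁`: observed edge density over the pairs selected by `cls`. -/
def u1hat {n : ℕ} (cls y : Fin n → Fin n → Bool) : ℝ :=
  pairCard (fun i j => cls i j && y i j) / pairCard cls

/-- `û₂`: half the disagreement rate of the two replicates over the pairs
selected by `cls`. -/
def u2hat {n : ℕ} (cls y y' : Fin n → Fin n → Bool) : ℝ :=
  pairCard (fun i j => cls i j && (y i j != y' i j)) / (2 * pairCard cls)

/-- Estimator of the type II error rate over the pairs selected by `cls`. -/
def betaHat {n : ℕ} (cls y y' : Fin n → Fin n → Bool) : ℝ :=
  u2hat cls y y' / u1hat cls y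

/-- `γ̂₁ = √n (β̂_b − β̂₁)`. -/
def gammaHat1 {n : ℕ} (c : Fin n → Bool) (y y' : Fin n → Fin n → Bool) : ℝ :=
  Real.sqrt n * (betaHat (between c) y y' - betaHat (within1 c) y y')

/-- `γ̂₂ = √n (β̂_b − β̂₂)`. -/
def gammaHat2 {n : ℕ} (c : Fin n → Bool) (y y' : Fin n → Fin n → Bool) : ℝ :=
  Real.sqrt n * (betaHat (between c) y y' - betaHat (within2 c) y y')

/-- `μ̂₁ = √n (û₁,₁/(1−β̂₁) − û₁,b/(1−β̂_b))`. -/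
def muHat1 {n : ℕ} (c : Fin n → Bool) (y y' : Fin n → Fin n → Bool) : ℝ :=
  Real.sqrt n * (u1hat (within1 c) y / (1 - betaHat (within1 c) y y')
    - u1hat (between c) y / (1 - betaHat (between c) y y'))

/-- `μ̂₂ = √n (û₁,₂/(1−β̂₂) − û₁,b/(1−β̂_b))`. -/
def muHat2 {n : ℕ} (c : Fin n → Bool) (y y' : Fin n → Fin n → Bool) : ℝ :=
  Real.sqrt n * (u1hat (within2 c) y / (1 - betaHat (within2 c) y y')
    - u1hat (between c) y / (1 - betaHat (between c) y y'))

/-- The chi-squared distribution with `k` degrees of freedom. -/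
def chiSqMeasure (k : ℝ) : Measure ℝ := gammaMeasure (k / 2) (1 / 2)

/-- The statistic vector (n(β̂_b − b), √n γ̂₁, √n γ̂₂). -/
def statVec3 {n : ℕ} (b : ℝ) (c : Fin n → Bool)
    (y y' : Fin n → Fin n → Bool) : Fin 3 → ℝ :=
  ![ (n : ℝ) * (betaHat (between c) y y' - b),
     Real.sqrt n * gammaHat1 c y y',
     Real.sqrt n * gammaHat2 c y y' ]

/-- The estimator vector (γ̂₁, γ̂₂, μ̂₁, μ̂₂). -/
def estVec4 {n : ℕ} (c : Fin n → Bool)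
    (y y' : Fin n → Fin n → Bool) : Fin 4 → ℝ :=
  ![ gammaHat1 c y y', gammaHat2 c y y', muHat1 c y y', muHat2 c y y' ]

/-- The statistic Q_{n,β̄}(b). -/
def Qbeta {n : ℕ} (b : ℝ) (c : Fin n → Bool) (y y' : Fin n → Fin n → Bool)
    (Θ : Matrix (Fin 3) (Fin 3) ℝ) : ℝ :=
  ∑ k, ∑ k', statVec3 b c y y' k * Θ k k' * statVec3 b c y y' k'

/-- The statistic Q_{n,μ}. -/
def Qmu {n : ℕ} (c : Fin n → Bool) (y y' : Fin n → Fin n → Bool)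
    (Θ : Matrix (Fin 4) (Fin 4) ℝ) : ℝ :=
  (n : ℝ) * ∑ k, ∑ k', estVec4 c y y' k * Θ k k' * estVec4 c y y' k'

abbrev Eu (d : ℕ) := EuclideanSpace ℝ (Fin d)

lemma gauss_int (d : ℕ) : Integrable (fun x : Eu d => (2*Real.pi)^(-(d/2:ℝ)) * Real.exp (-‖x‖^2/2)) := by
  have h := GaussianFourier.integrable_cexp_neg_mul_sq_norm_add (V := Eu d) (b := 1/2) (by norm_num) 0 0
  have h2 := h.re.const_mul ((2*Real.pi)^(-(d/2:ℝ)))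
  refine h2.congr (ae_of_all _ fun x => ?_)
  simp only [zero_mul, add_zero]
  congr 1
  have : (-(1/2:ℂ) * (‖x‖:ℂ)^2) = ((-‖x‖^2/2 : ℝ) : ℂ) := by push_cast; ring
  rw [this, ← Complex.ofReal_exp]
  exact Complex.ofReal_re _

lemma stdGaussian_density (d : ℕ) : stdGaussian (Eu d) =
    volume.withDensity (fun x : Eu d => ENNReal.ofReal ((2*Real.pi)^(-(d/2:ℝ)) * Real.exp (-‖x‖^2/2))) := by
  have : IsFiniteMeasure (volume.withDensity (fun x : Eu d => ENNReal.ofReal ((2*Real.pi)^(-(d/2:ℝ)) * Real.exp (-‖x‖^2/2)))) :=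
    isFiniteMeasure_withDensity_ofReal (gauss_int d).2
  apply Measure.ext_of_charFun
  ext t
  rw [charFun_stdGaussian, charFun_apply, integral_withDensity_eq_integral_toReal_smul₀]
  rotate_left
  · exact (gauss_int d).1.aemeasurable.ennreal_ofReal
  · exact ae_of_all _ fun x => ENNReal.ofReal_lt_top
  have h := GaussianFourier.integral_cexp_neg_mul_sq_norm_add (V := Eu d) (b := 1/2) (by norm_num) Complex.I t
  have e : ∀ x : Eu d, (ENNReal.ofReal ((2*Real.pi)^(-(d/2:ℝ)) * Real.exp (-‖x‖^2/2))).toReal • Complex.exp (inner ℝ x t * Complex.I)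
      = (((2*Real.pi)^(-(d/2:ℝ)) : ℝ) : ℂ) * Complex.exp (-(1/2) * ‖x‖^2 + Complex.I * inner ℝ t x) := by
    intro x
    rw [ENNReal.toReal_ofReal (by positivity), Complex.exp_add, Complex.real_smul, real_inner_comm]
    push_cast
    rw [mul_assoc]
    congr 3
    · ring_nf
    · ring_nf
  simp_rw [e]
  rw [integral_const_mul, h, ← mul_assoc]
  have : (((2*Real.pi)^(-(d/2:ℝ)) : ℝ) : ℂ) * (Real.pi/(1/2) : ℂ)^(Module.finrank ℝ (Eu d)/2 : ℂ) = 1 := by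
    rw [finrank_euclideanSpace_fin]
    have : (Real.pi/(1/2) : ℂ) = ((2*Real.pi : ℝ) : ℂ) := by push_cast; ring
    rw [this, show ((d:ℂ)/2) = ((d/2:ℝ):ℂ) by push_cast; rfl, ← Complex.ofReal_cpow (by positivity), ← Complex.ofReal_mul,
      ← Real.rpow_add (by positivity)]
    simp
  rw [this, one_mul]
  congr 1
  rw [Complex.I_sq]; ring

/-- radial integral -/
def radI (d : ℕ) (s : Set ℝ) : ℝ := ∫ r in Set.Ioi (0:ℝ), r^(d-1) * (Real.exp (-r^2/2) * s.indicator 1 (r^2))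

lemma std_rad (d : ℕ) (hd : 0 < d) : ∃ C : ℝ, ∀ s, MeasurableSet s →
    (stdGaussian (Eu d)).real {z | ‖z‖^2 ∈ s} = C * radI d s := by
  refine ⟨d * ((volume : Measure (Eu d)).real (Metric.ball 0 1) * (2*Real.pi)^(-(d/2:ℝ))), fun s hs => ?_⟩
  have : Nontrivial (Eu d) := by
    have : NeZero d := ⟨hd.ne'⟩
    infer_instance
  have h := integral_fun_norm_addHaar (volume : Measure (Eu d))
    (fun r => (2*Real.pi)^(-(d/2:ℝ)) * (Real.exp (-r^2/2) * s.indicator 1 (r^2)))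
  have hm : MeasurableSet {z : Eu d | ‖z‖^2 ∈ s} := by
    have : Measurable (fun z : Eu d => ‖z‖^2) := by fun_prop
    exact this hs
  rw [finrank_euclideanSpace_fin] at h
  rw [stdGaussian_density, measureReal_def, withDensity_apply _ hm, ← integral_eq_lintegral_of_nonneg_ae
    (ae_of_all _ fun x => by positivity) (gauss_int d).1.restrict,
    ← integral_indicator hm]
  have e : ({z : Eu d | ‖z‖^2 ∈ s}.indicator fun x : Eu d => (2*Real.pi)^(-(d/2:ℝ)) * Real.exp (-‖x‖^2/2))
     = fun x : Eu d => (2*Real.pi)^(-(d/2:ℝ)) * (Real.exp (-‖x‖^2/2) * s.indicator 1 (‖x‖^2)) := by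
    ext x
    by_cases hx : ‖x‖^2 ∈ s <;> simp [Set.indicator, hx]
  rw [e, h]
  simp only [nsmul_eq_mul, smul_eq_mul]
  have e2 : ∫ y in Set.Ioi (0:ℝ), y^(d-1) * ((2*Real.pi)^(-(d/2:ℝ)) * (Real.exp (-y^2/2) * s.indicator 1 (y^2)))
      = (2*Real.pi)^(-(d/2:ℝ)) * radI d s := by
    rw [radI, ← integral_const_mul]
    congr 1
    ext r; ring
  rw [e2]; ring

lemma gam_rad (d : ℕ) (hd : 0 < d) : ∃ C : ℝ, ∀ s, MeasurableSet s →
    (chiSqMeasure d).real s = C * radI d s := by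
  have hd' : (0:ℝ) < d := by exact_mod_cast hd
  refine ⟨2 * ((1/2)^(d/2:ℝ) / Real.Gamma (d/2)), fun s hs => ?_⟩
  rw [chiSqMeasure, gammaMeasure, measureReal_def, withDensity_apply _ hs]
  unfold gammaPDF
  rw [← integral_eq_lintegral_of_nonneg_ae
    (ae_of_all _ fun x => gammaPDFReal_nonneg (by positivity) (by norm_num) x) (stronglyMeasurable_gammaPDFReal _ _).aestronglyMeasurable,
    ← integral_indicator hs]
  have h0 : ∫ x, s.indicator (gammaPDFReal (d/2) (1/2)) x = ∫ x in Set.Ioi 0, s.indicator (gammaPDFReal (d/2) (1/2)) x := by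
    rw [← integral_Ici_eq_integral_Ioi, ← integral_indicator measurableSet_Ici]
    congr 1
    ext x
    by_cases hx : 0 ≤ x
    · simp [hx]
    · simp [Set.indicator, hx, gammaPDFReal]
  rw [h0, ← integral_comp_rpow_Ioi _ (two_ne_zero), radI, ← integral_const_mul]
  apply setIntegral_congr_fun measurableSet_Ioi
  intro r hr
  have hr : 0 < r := hr
  have e1 : r^(2:ℝ) = r^2 := by norm_cast
  simp only [smul_eq_mul, e1]
  by_cases hx : r^2 ∈ s
  · simp only [Set.indicator, hx, if_true, gammaPDFReal, Pi.one_apply]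
    rw [if_pos (by positivity)]
    have : r^(d-1) = r^((2:ℝ)-1) * (r^2)^((d/2:ℝ)-1) := by
      rw [← e1, ← Real.rpow_mul hr.le, ← Real.rpow_add hr, ← Real.rpow_natCast, Nat.cast_sub hd]
      congr 1; push_cast; ring
    rw [this]
    rw [show -(1/2 * r^2) = -r^2/2 by ring]
    rw [show |(2:ℝ)| = 2 by norm_num]
    ring
  · simp [Set.indicator, hx]

instance chi_prob (d : ℕ) [NeZero d] : IsProbabilityMeasure (chiSqMeasure d) := by
  have : (0:ℝ) < d := by exact_mod_cast Nat.pos_of_ne_zero (NeZero.ne d)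
  exact isProbabilityMeasure_gammaMeasure (by positivity) (by norm_num)

lemma std_chi (d : ℕ) [NeZero d] (s : Set ℝ) (hs : MeasurableSet s) :
    (stdGaussian (Eu d)).real {z | ‖z‖^2 ∈ s} = (chiSqMeasure d).real s := by
  have hd : 0 < d := Nat.pos_of_ne_zero (NeZero.ne d)
  obtain ⟨C1, h1⟩ := std_rad d hd
  obtain ⟨C2, h2⟩ := gam_rad d hd
  have a1 := h1 Set.univ MeasurableSet.univ
  have a2 := h2 Set.univ MeasurableSet.univ
  simp at a1 a2
  have : radI d Set.univ ≠ 0 := by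
    intro h; simp [h] at a1
  have : C1 = C2 := mul_right_cancel₀ this (a1.symm.trans a2)
  rw [h1 s hs, h2 s hs, this]
lemma weak_real (ρ : ℕ → ProbabilityMeasure ℝ) (ν : ProbabilityMeasure ℝ)
    (h : ∀ x, Tendsto (fun n => (ρ n : Measure ℝ).real (Set.Iic x)) atTop (nhds ((ν : Measure ℝ).real (Set.Iic x)))) :
    Tendsto ρ atTop (nhds ν) := by
  have key : ∀ (m : ProbabilityMeasure ℝ) (a b : ℝ), a ≤ b → (m : Measure ℝ).real (Set.Ioc a b) =
      (m : Measure ℝ).real (Set.Iic b) - (m : Measure ℝ).real (Set.Iic a) := by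
    intro m a b hab
    rw [show Set.Ioc a b = Set.Iic b \ Set.Iic a by ext; simp [and_comm], measureReal_sdiff (Set.Iic_subset_Iic.2 hab) measurableSet_Iic]
  refine IsPiSystem.tendsto_probabilityMeasure_of_tendsto_of_mem
    (S := {s | ∃ a b : ℝ, s = Set.Ioc a b}) ?_ ?_ ?_ ?_
  · rintro _ ⟨a, b, rfl⟩ _ ⟨a', b', rfl⟩ _
    exact ⟨a ⊔ a', b ⊓ b', Set.Ioc_inter_Ioc⟩
  · rintro _ ⟨a, b, rfl⟩; exact measurableSet_Ioc
  · intro u hu x hx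
    obtain ⟨ε, hε, hb⟩ := Metric.isOpen_iff.1 hu x hx
    refine ⟨_, ⟨x - ε/2, x + ε/2, rfl⟩, Ioc_mem_nhds (by linarith) (by linarith), fun y hy => hb ?_⟩
    rw [Metric.mem_ball, Real.dist_eq, abs_lt]
    exact ⟨by linarith [hy.1], by linarith [hy.2]⟩
  · rintro _ ⟨a, b, rfl⟩
    rcases le_total a b with hab | hab
    · rw [← NNReal.tendsto_coe]
      have := (h b).sub (h a)
      simp only [← key _ a b hab] at this
      exact this
    · simp [Set.Ioc_eq_empty_of_le hab]

instance mvg_prob {d : ℕ} (S : Matrix (Fin d) (Fin d) ℝ) :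
    IsProbabilityMeasure (multivariateGaussian (0 : Eu d) S) := inferInstance

lemma weak_vec {d : ℕ} (S : Matrix (Fin d) (Fin d) ℝ) (hS : S.PosDef)
    (ρ : ℕ → ProbabilityMeasure (Eu d))
    (h : ∀ t : Fin d → ℝ, t ≠ 0 → ∀ x : ℝ,
      Tendsto (fun n => (ρ n : Measure (Eu d)).real {v | ∑ k, t k * v k ≤ x}) atTop
        (nhds ((gaussianReal 0 (Real.toNNReal (∑ k, ∑ k', t k * S k k' * t k'))).real (Set.Iic x)))) :
    Tendsto ρ atTop (nhds (⟨multivariateGaussian 0 S, inferInstance⟩ : ProbabilityMeasure (Eu d))) := by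
  apply ProbabilityMeasure.tendsto_of_tendsto_charFun
  intro t
  by_cases ht : t = 0
  · subst ht; simp [charFun_zero]
  have ht' : (t : Fin d → ℝ) ≠ 0 := by
    intro hh; apply ht; ext i; exact congrFun hh i
  set σ := ∑ k, ∑ k', t k * S k k' * t k' with hσ
  have hdot : t.ofLp ⬝ᵥ S.mulVec t.ofLp = σ := by
    simp only [dotProduct, Matrix.mulVec, hσ, Finset.mul_sum, mul_assoc]
  have hσ0 : 0 ≤ σ := by
    have := hS.posSemidef.dotProduct_mulVec_nonneg t.ofLp
    rw [star_trivial, hdot] at this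
    exact this
  have hmeas : Measurable (fun v : Eu d => ∑ k, t k * v k) := by fun_prop
  have h1 := weak_real (fun n => (ρ n).map hmeas.aemeasurable)
    ⟨gaussianReal 0 (Real.toNNReal σ), inferInstance⟩ (by
      intro x
      refine (h t ht' x).congr fun n => ?_
      simp only [ProbabilityMeasure.toMeasure_map, measureReal_def]
      rw [Measure.map_apply hmeas measurableSet_Iic]
      rfl)
  have h2 := (ProbabilityMeasure.tendsto_iff_tendsto_charFun.1 h1) 1
  have e1 : ∀ n, charFun (((ρ n).map hmeas.aemeasurable : ProbabilityMeasure ℝ) : Measure ℝ) 1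
      = charFun (ρ n : Measure (Eu d)) t := by
    intro n
    rw [charFun_apply, charFun_apply, ProbabilityMeasure.toMeasure_map, integral_map hmeas.aemeasurable
      (Measurable.aestronglyMeasurable (by fun_prop))]
    congr 1
    ext v
    simp [PiLp.inner_apply]
  simp only [e1] at h2
  convert h2 using 2
  simp only [ProbabilityMeasure.coe_mk]
  rw [charFun_gaussianReal, charFun_multivariateGaussian hS.posSemidef, hdot]
  simp [hσ0]

open scoped MatrixOrder in
lemma mvg_quad {d : ℕ} [NeZero d] (S : Matrix (Fin d) (Fin d) ℝ) (hS : S.PosDef) (c : ℝ) :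
    (multivariateGaussian (0 : Eu d) S).real {v | c ≤ ∑ k, ∑ k', v k * S⁻¹ k k' * v k'} =
      1 - (chiSqMeasure d).real (Set.Iic c) := by
  have hm : MeasurableSet {v : Eu d | c ≤ ∑ k, ∑ k', v k * S⁻¹ k k' * v k'} :=
    measurableSet_le measurable_const (by fun_prop)
  set R := CFC.sqrt S with hR
  have hRR : R * R = S := CFC.sqrt_mul_sqrt_self S (Matrix.nonneg_iff_posSemidef.2 hS.posSemidef)
  have hRs : R.transpose = R := by
    have : R.PosSemidef := Matrix.nonneg_iff_posSemidef.1 (CFC.sqrt_nonneg S)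
    have := this.isHermitian
    rwa [Matrix.IsHermitian, Matrix.conjTranspose_eq_transpose_of_trivial] at this
  have hu : IsUnit S := hS.isUnit
  have hRu : IsUnit R := by
    rw [Matrix.isUnit_iff_isUnit_det] at hu ⊢
    rw [← hRR, Matrix.det_mul] at hu
    exact isUnit_of_mul_isUnit_left hu
  have hid : R * S⁻¹ * R = 1 := by
    have hd := (Matrix.isUnit_iff_isUnit_det R).1 hRu
    rw [← hRR, Matrix.mul_inv_rev, Matrix.mul_assoc, Matrix.mul_assoc, Matrix.nonsing_inv_mul R hd,
      Matrix.mul_one, Matrix.mul_nonsing_inv R hd]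
  have hq : ∀ z : Eu d, ∑ k, ∑ k', (Matrix.toEuclideanCLM (𝕜 := ℝ) R z) k * S⁻¹ k k' *
      (Matrix.toEuclideanCLM (𝕜 := ℝ) R z) k' = ‖z‖^2 := by
    intro z
    have e : ∀ w : Fin d → ℝ, ∑ k, ∑ k', w k * S⁻¹ k k' * w k' = w ⬝ᵥ S⁻¹.mulVec w := by
      intro w
      simp only [dotProduct, Matrix.mulVec, Finset.mul_sum, mul_assoc]
    have e2 : (Matrix.toEuclideanCLM (𝕜 := ℝ) R z).ofLp = R.mulVec z.ofLp := by
      simp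
    rw [e, e2, Matrix.mulVec_mulVec]
    nth_rewrite 1 [← hRs]
    rw [Matrix.mulVec_transpose, ← Matrix.dotProduct_mulVec, Matrix.mulVec_mulVec, ← Matrix.mul_assoc,
      hid, Matrix.one_mulVec, EuclideanSpace.real_norm_sq_eq]
    simp [dotProduct, sq]
  rw [multivariateGaussian, measureReal_def, Measure.map_apply (by fun_prop) hm]
  have : (fun x => (0: Eu d) + Matrix.toEuclideanCLM (𝕜 := ℝ) R x) ⁻¹' {v : Eu d | c ≤ ∑ k, ∑ k', v k * S⁻¹ k k' * v k'}
      = {z | ‖z‖^2 ∈ Set.Ici c} := by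
    ext z
    simp only [Set.mem_preimage, Set.mem_ofPred_eq, zero_add, Set.mem_Ici, hq]
  rw [this, ← measureReal_def, std_chi d _ measurableSet_Ici]
  have hna : NullSingletonClass (chiSqMeasure d) := by
    unfold chiSqMeasure gammaMeasure; infer_instance
  rw [← measureReal_congr (Ioi_ae_eq_Ici (μ := chiSqMeasure d) (a := c)), ← Set.compl_Iic,
    probReal_compl_eq_one_sub measurableSet_Iic]

lemma core {d : ℕ} [NeZero d] (Ω : ℕ → Type) [mΩ : ∀ n, MeasurableSpace (Ω n)] (m : ∀ n, Measure (Ω n))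
    (V : ∀ n, Ω n → Fin d → ℝ) (Θ : ∀ n, Ω n → Matrix (Fin d) (Fin d) ℝ)
    (S : Matrix (Fin d) (Fin d) ℝ) (hS : S.PosDef)
    (hprob0 : ∀ᶠ n in atTop, m n = 0 ∨ IsProbabilityMeasure (m n))
    (hae : ∀ᶠ n in atTop, AEMeasurable (V n) (m n))
    (hV : ∀ t : Fin d → ℝ, t ≠ 0 → ∀ x : ℝ,
      Tendsto (fun n => (m n {ω | ∑ k, t k * V n ω k ≤ x}).toReal) atTop
        (nhds ((gaussianReal 0 (Real.toNNReal (∑ k, ∑ k', t k * S k k' * t k')) (Set.Iic x)).toReal)))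
    (hΘ : ∀ (k k' : Fin d), ∀ ε > (0:ℝ),
      Tendsto (fun n => m n {ω | ε < |Θ n ω k k' - S⁻¹ k k'|}) atTop (nhds 0))
    (c α : ℝ) (hc : (chiSqMeasure d (Set.Iic c)).toReal = 1 - α) (ε : ℝ) (hε : 0 < ε) :
    ∀ᶠ n in atTop, m n {ω | c < ∑ k, ∑ k', V n ω k * Θ n ω k k' * V n ω k'} ≤ ENNReal.ofReal (α + ε) := by
  classical
  have hα : 0 ≤ α := by
    have : (chiSqMeasure d).real (Set.Iic c) ≤ 1 := measureReal_le_one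
    rw [measureReal_def, hc] at this; linarith
  have hprob : ∀ᶠ n in atTop, IsProbabilityMeasure (m n) := by
    have ht1 : (fun _ => 1 : Fin d → ℝ) ≠ 0 := fun h => by
      have := congrFun h 0
      simp at this
    have hlim := hV (fun _ => 1) ht1 0
    have hpos : 0 < (gaussianReal 0 (Real.toNNReal (∑ k, ∑ k', (1:ℝ) * S k k' * 1)) (Set.Iic 0)).toReal := by
      have hq := hS.dotProduct_mulVec_pos ht1
      have hq' : 0 < ∑ k, ∑ k', (1:ℝ) * S k k' * 1 := by
        simpa [dotProduct, Matrix.mulVec] using hq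
      have hne : Real.toNNReal (∑ k, ∑ k', (1:ℝ) * S k k' * 1) ≠ 0 := by
        simpa using hq'
      rw [ENNReal.toReal_pos_iff]
      refine ⟨pos_iff_ne_zero.2 fun h0 => ?_, measure_lt_top _ _⟩
      have := gaussianReal_absolutelyContinuous' 0 hne h0
      simp at this
    filter_upwards [hprob0, hlim.eventually_const_lt hpos] with n h1 h2
    rcases h1 with h1 | h1
    · simp [h1] at h2
    · exact h1
  -- laws
  have hex : ∀ n, ∃ r : ProbabilityMeasure (Eu d), IsProbabilityMeasure (m n) ∧ AEMeasurable (V n) (m n) →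
      ∀ s : Set (Eu d), MeasurableSet s →
      (r : Measure (Eu d)) s = m n {ω | WithLp.toLp 2 (V n ω) ∈ s} := by
    intro n
    by_cases h : IsProbabilityMeasure (m n) ∧ AEMeasurable (V n) (m n)
    · have := h.1
      have hm : AEMeasurable (fun ω => WithLp.toLp 2 (V n ω)) (m n) :=
        (by fun_prop : Measurable (WithLp.toLp 2 : (Fin d → ℝ) → Eu d)).comp_aemeasurable h.2
      refine ⟨⟨(m n).map (fun ω => WithLp.toLp 2 (V n ω)), Measure.isProbabilityMeasure_map hm⟩, fun _ s hs => ?_⟩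
      rw [ProbabilityMeasure.coe_mk, Measure.map_apply_of_aemeasurable hm hs]
      rfl
    · exact ⟨⟨Measure.dirac 0, inferInstance⟩, fun h' => absurd h' h⟩
  choose ρ hρ' using hex
  have hρ : ∀ᶠ n in atTop, ∀ s : Set (Eu d), MeasurableSet s →
      (ρ n : Measure (Eu d)) s = m n {ω | WithLp.toLp 2 (V n ω) ∈ s} := by
    filter_upwards [hprob, hae] with n h1 h2 using hρ' n ⟨h1, h2⟩
  have hw := weak_vec S hS ρ (by
    intro t ht x
    refine (hV t ht x).congr' ?_
    filter_upwards [hρ] with n hn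
    rw [measureReal_def, hn _ (measurableSet_le (by fun_prop) measurable_const)]
    rfl)
  set ν := multivariateGaussian (0 : Eu d) S with hν
  let F : ℝ → Set (Eu d) := fun δ => {v | c ≤ ∑ k, ∑ k', v k * S⁻¹ k k' * v k' + δ * (∑ k, |v k|)^2}
  have hFc : ∀ δ, IsClosed (F δ) := fun δ => isClosed_le continuous_const (by fun_prop)
  have hstep : ∀ δ > 0, limsup (fun n => m n {ω | c < ∑ k, ∑ k', V n ω k * Θ n ω k k' * V n ω k'}) atTop
      ≤ ν (F δ) := by
    intro δ hδ
    have hle : ∀ᶠ n in atTop, m n {ω | c < ∑ k, ∑ k', V n ω k * Θ n ω k k' * V n ω k'} ≤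
        (ρ n : Measure (Eu d)) (F δ) + ∑ k, ∑ k', m n {ω | δ < |Θ n ω k k' - S⁻¹ k k'|} := by
      filter_upwards [hρ] with n hn
      rw [hn _ (hFc δ).measurableSet]
      have hsub : {ω | c < ∑ k, ∑ k', V n ω k * Θ n ω k k' * V n ω k'} ⊆
          {ω | WithLp.toLp 2 (V n ω) ∈ F δ} ∪ ⋃ k, ⋃ k', {ω | δ < |Θ n ω k k' - S⁻¹ k k'|} := by
        intro ω hω
        by_cases hb : ∃ k k', δ < |Θ n ω k k' - S⁻¹ k k'|
        · right
          simpa using hb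
        · left
          push Not at hb
          simp only [Set.mem_ofPred_eq] at hω
          simp only [F, Set.mem_ofPred_eq]
          refine hω.le.trans ?_
          rw [sq, Finset.sum_mul_sum, Finset.mul_sum, ← Finset.sum_add_distrib]
          refine Finset.sum_le_sum fun k _ => ?_
          rw [Finset.mul_sum, ← Finset.sum_add_distrib]
          refine Finset.sum_le_sum fun k' _ => ?_
          have : V n ω k * (Θ n ω k k' - S⁻¹ k k') * V n ω k' ≤ δ * (|V n ω k| * |V n ω k'|) := by
            refine (le_abs_self _).trans ?_
            rw [abs_mul, abs_mul]
            have := mul_le_mul_of_nonneg_right (hb k k') (mul_nonneg (abs_nonneg (V n ω k)) (abs_nonneg (V n ω k')))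
            linarith
          linarith
      refine (measure_mono hsub).trans ((measure_union_le _ _).trans ?_)
      gcongr
      refine (measure_iUnion_fintype_le _ _).trans ?_
      exact Finset.sum_le_sum fun k _ => measure_iUnion_fintype_le _ _
    have ht : Tendsto (fun n => ∑ k, ∑ k', m n {ω | δ < |Θ n ω k k' - S⁻¹ k k'|}) atTop (nhds 0) := by
      have := tendsto_finsetSum (Finset.univ : Finset (Fin d)) fun k _ =>
        tendsto_finsetSum (Finset.univ : Finset (Fin d)) fun k' _ => hΘ k k' δ hδ
      simpa using this
    calc _ ≤ limsup (fun n => (ρ n : Measure (Eu d)) (F δ) + ∑ k, ∑ k', m n {ω | δ < |Θ n ω k k' - S⁻¹ k k'|}) atTop :=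
          limsup_le_limsup hle
      _ ≤ ν (F δ) := by
          refine (ENNReal.limsup_add_of_right_tendsto_zero ht (fun n => (ρ n : Measure (Eu d)) (F δ))).le.trans ?_
          exact ProbabilityMeasure.limsup_measure_closed_le_of_tendsto hw (hFc δ)
  have hlim : Tendsto (fun j : ℕ => ν (F (1/((j:ℝ)+1)))) atTop (nhds (ν (F 0))) := by
    have e : F 0 = ⋂ j : ℕ, F (1/((j:ℝ)+1)) := by
      ext v
      simp only [Set.mem_iInter, F, Set.mem_ofPred_eq]
      constructor
      · intro h j
        have : 0 ≤ 1/((j:ℝ)+1) * (∑ k, |v k|)^2 := by positivity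
        linarith
      · intro h
        refine ge_of_tendsto' (x := atTop) ?_ h
        exact Tendsto.const_add _ (Tendsto.mul_const _ tendsto_one_div_add_atTop_nhds_zero_nat)
    rw [e]
    apply tendsto_measure_iInter_atTop
    · exact fun j => (hFc _).measurableSet.nullMeasurableSet
    · intro i j hij v hv
      simp only [F, Set.mem_ofPred_eq] at hv ⊢
      refine hv.trans ?_
      gcongr
    · exact ⟨0, measure_ne_top _ _⟩
  have hfin : limsup (fun n => m n {ω | c < ∑ k, ∑ k', V n ω k * Θ n ω k k' * V n ω k'}) atTop ≤ ν (F 0) :=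
    ge_of_tendsto' hlim fun j => hstep _ (by positivity)
  have hF0 : ν (F 0) = ENNReal.ofReal α := by
    have := mvg_quad S hS c
    rw [measureReal_def (chiSqMeasure d), hc] at this
    have e : F 0 = {v : Eu d | c ≤ ∑ k, ∑ k', v k * S⁻¹ k k' * v k'} := by simp [F]
    rw [e, ← ofReal_measureReal, this]
    congr 1; ring
  have hlt : limsup (fun n => m n {ω | c < ∑ k, ∑ k', V n ω k * Θ n ω k k' * V n ω k'}) atTop < ENNReal.ofReal (α + ε) := by
    refine (hfin.trans_eq hF0).trans_lt ?_
    rw [ENNReal.ofReal_lt_ofReal_iff (by linarith)]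
    linarith
  filter_upwards [eventually_lt_of_limsup_lt hlt] with n hn using hn.le

lemma null_of_sum {Ω K : Type*} [MeasurableSpace Ω] [Fintype K] (P : Measure Ω) [IsProbabilityMeasure P]
    (X : Ω → K) (h : ∑ x, P {ω | X ω = x} ≤ 1) (T : Set K) : NullMeasurableSet {ω | X ω ∈ T} P := by
  classical
  have hb : ∀ U : Set K, P {ω | X ω ∈ U} ≤ ∑ x ∈ univ.filter (· ∈ U), P {ω | X ω = x} := by
    intro U
    refine (measure_mono ?_).trans (measure_biUnion_finset_le _ _)
    intro ω hω
    simpa using hω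
  have h2 : P {ω | X ω ∈ T} + P {ω | X ω ∈ Tᶜ} ≤ 1 := by
    refine (add_le_add (hb T) (hb Tᶜ)).trans (le_trans (le_of_eq ?_) h)
    have := Finset.sum_filter_add_sum_filter_not univ (· ∈ T) (fun x => P {ω | X ω = x})
    simpa only [Set.mem_compl_iff] using this
  set M := toMeasurable P {ω | X ω ∈ T} with hM
  set N := toMeasurable P {ω | X ω ∈ Tᶜ} with hN
  have hMN : M ∪ N = Set.univ := by
    apply Set.eq_univ_of_forall
    intro ω
    by_cases hω : X ω ∈ T
    · exact Or.inl (subset_toMeasurable _ _ hω)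
    · exact Or.inr (subset_toMeasurable _ _ hω)
  have h3 := measure_union_add_inter (μ := P) M (measurableSet_toMeasurable P {ω | X ω ∈ Tᶜ})
  rw [← hN, hMN, measure_univ, hM, hN, measure_toMeasurable, measure_toMeasurable, ← hM, ← hN] at h3
  have h4 : P (M ∩ N) = 0 := by
    rw [← h3] at h2
    have : 1 + P (M ∩ N) ≤ 1 + 0 := by simpa using h2
    exact le_antisymm ((ENNReal.add_le_add_iff_left ENNReal.one_ne_top).1 this) bot_le
  have h5 : {ω | X ω ∈ T} =ᵐ[P] M := by
    refine (subset_toMeasurable P _).eventuallyLE.antisymm ?_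
    rw [ae_le_set]
    refine measure_mono_null ?_ h4
    rintro ω ⟨h6, h7⟩
    exact ⟨h6, subset_toMeasurable _ _ h7⟩
  exact (measurableSet_toMeasurable P _).nullMeasurableSet.congr h5.symm

abbrev Mat (n : ℕ) := Fin n → Fin n → Bool
abbrev Cfg (n : ℕ) := (Fin n → Bool) × Mat n × Mat n × Mat n

def SymL {n : ℕ} (a : Mat n) : Prop := (∀ i j, a i j = a j i) ∧ (∀ i, a i i = false)

lemma symL_ext {n : ℕ} {a b : Mat n} (ha : SymL a) (hb : SymL b) (h : ∀ i j, i < j → a i j = b i j) : a = b := by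
  funext i j
  rcases lt_trichotomy i j with hij | hij | hij
  · exact h i j hij
  · subst hij; rw [ha.2, hb.2]
  · rw [ha.1, hb.1, h j i hij]

abbrev Prs (n : ℕ) := {p : Fin n × Fin n // p ∈ (Finset.univ.filter (fun p : Fin n × Fin n => p.1 < p.2))}

def cfgMass {n : ℕ} (B βm : Bool → Bool → ℝ) (κ : ℝ) (x : Cfg n) : ℝ :=
  labelMass κ x.1 * edgeMass B x.1 x.2.1 * obsMass βm x.1 x.2.1 x.2.2.1 * obsMass βm x.1 x.2.1 x.2.2.2

def pm (b β : ℝ) (z : Bool × Bool × Bool) : ℝ :=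
  (if z.1 then b else 1 - b) *
  (if z.1 then (if z.2.1 then 1 - β else β) else (if z.2.1 then 0 else 1)) *
  (if z.1 then (if z.2.2 then 1 - β else β) else (if z.2.2 then 0 else 1))

lemma pm_nonneg {b β : ℝ} (hb0 : 0 ≤ b) (hb1 : b ≤ 1) (h0 : 0 ≤ β) (h1 : β ≤ 1) (z : Bool × Bool × Bool) :
    0 ≤ pm b β z := by
  have := sub_nonneg.2 hb1
  have := sub_nonneg.2 h1
  unfold pm
  split_ifs <;> positivity

lemma pm_sum (b β : ℝ) : ∑ z, pm b β z = 1 := by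
  simp [Fintype.sum_prod_type, pm]
  ring

def redMass {n : ℕ} (B βm : Bool → Bool → ℝ) (κ : ℝ) (x : (Fin n → Bool) × (Prs n → Bool × Bool × Bool)) : ℝ :=
  (∏ i, (if x.1 i then κ else 1 - κ)) * ∏ p : Prs n, pm (B (x.1 p.1.1) (x.1 p.1.2)) (βm (x.1 p.1.1) (x.1 p.1.2)) (x.2 p)

def red {n : ℕ} (x : Cfg n) : (Fin n → Bool) × (Prs n → Bool × Bool × Bool) :=
  (x.1, fun p => (x.2.1 p.1.1 p.1.2, x.2.2.1 p.1.1 p.1.2, x.2.2.2 p.1.1 p.1.2))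

lemma cfgMass_eq {n : ℕ} (B βm : Bool → Bool → ℝ) (κ : ℝ) (x : Cfg n) :
    cfgMass B βm κ x = redMass B βm κ (red x) := by
  unfold cfgMass redMass red labelMass edgeMass obsMass pm
  simp only
  rw [mul_assoc, mul_assoc, ← Finset.prod_mul_distrib, ← Finset.prod_mul_distrib]
  congr 1
  rw [← Finset.prod_coe_sort]
  refine Finset.prod_congr rfl fun p _ => ?_
  ring

lemma redMass_nonneg {n : ℕ} {B βm : Bool → Bool → ℝ} {κ : ℝ} (hκ0 : 0 ≤ κ) (hκ1 : κ ≤ 1)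
    (hB : ∀ x y, 0 ≤ B x y ∧ B x y ≤ 1) (hβ : ∀ x y, 0 ≤ βm x y ∧ βm x y ≤ 1) (x) :
    0 ≤ redMass (n := n) B βm κ x := by
  refine mul_nonneg (Finset.prod_nonneg fun i _ => ?_) (Finset.prod_nonneg fun p _ => ?_)
  · split_ifs <;> linarith
  · exact pm_nonneg (hB _ _).1 (hB _ _).2 (hβ _ _).1 (hβ _ _).2 _

lemma redMass_sum {n : ℕ} (B βm : Bool → Bool → ℝ) (κ : ℝ) : ∑ x, redMass (n := n) B βm κ x = 1 := by
  rw [Fintype.sum_prod_type]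
  have : ∀ l : Fin n → Bool, ∑ f : Prs n → Bool × Bool × Bool, ∏ p : Prs n, pm (B (l p.1.1) (l p.1.2)) (βm (l p.1.1) (l p.1.2)) (f p) = 1 := by
    intro l
    rw [← Fintype.prod_sum (fun (p : Prs n) z => pm (B (l p.1.1) (l p.1.2)) (βm (l p.1.1) (l p.1.2)) z)]
    simp [pm_sum]
  have e : ∀ l : Fin n → Bool, ∑ f : Prs n → Bool × Bool × Bool, redMass B βm κ (l, f) =
      ∏ i, (if l i then κ else 1 - κ) := by
    intro l
    simp only [redMass]
    have e3 := Finset.mul_sum (univ : Finset (Prs n → Bool × Bool × Bool))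
      (fun f => ∏ p : Prs n, pm (B (l p.1.1) (l p.1.2)) (βm (l p.1.1) (l p.1.2)) (f p))
      (∏ i, (if l i then κ else 1 - κ))
    exact e3.symm.trans (by rw [this l, mul_one])
  simp only [e]
  rw [← Fintype.prod_sum (fun (_ : Fin n) (z : Bool) => if z then κ else 1 - κ)]
  simp

lemma IsObsSBM.nullMeas {Ω : Type*} [MeasurableSpace Ω] {P : Measure Ω} {n : ℕ}
    {B βm : Bool → Bool → ℝ} {κ : ℝ} {c : Ω → Fin n → Bool} {A Y Y' : Ω → Mat n}
    (h : IsObsSBM P n B βm κ c A Y Y') (hκ0 : 0 ≤ κ) (hκ1 : κ ≤ 1)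
    (hB : ∀ x y, 0 ≤ B x y ∧ B x y ≤ 1) (hβ : ∀ x y, 0 ≤ βm x y ∧ βm x y ≤ 1) (T : Set (Cfg n)) :
    NullMeasurableSet {ω | (c ω, A ω, Y ω, Y' ω) ∈ T} P := by
  classical
  have := h.isProb
  apply null_of_sum P (fun ω => ((c ω, A ω, Y ω, Y' ω) : Cfg n))
  let G : Finset (Cfg n) := univ.filter fun x => SymL x.2.1 ∧ SymL x.2.2.1 ∧ SymL x.2.2.2
  have hG : ∀ x : Cfg n, x ∈ G ↔ SymL x.2.1 ∧ SymL x.2.2.1 ∧ SymL x.2.2.2 := by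
    intro x
    simp [G]
  have h1 : ∀ x : Cfg n, P {ω | ((c ω, A ω, Y ω, Y' ω) : Cfg n) = x} =
      if x ∈ G then ENNReal.ofReal (redMass B βm κ (red x)) else 0 := by
    rintro ⟨l, a, y, y'⟩
    split_ifs with hx
    · rw [hG] at hx
      obtain ⟨ha, hy, hy'⟩ := hx
      rw [← cfgMass_eq]
      have := h.law l a y y' ha.1 ha.2 hy.1 hy.2 hy'.1 hy'.2
      rw [cfgMass, ← this]
      congr 1
      ext ω
      simp
    · have : {ω | ((c ω, A ω, Y ω, Y' ω) : Cfg n) = (l, a, y, y')} = ∅ := by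
        ext ω
        simp only [Set.mem_ofPred_eq, Set.mem_empty_iff_false, iff_false]
        intro he
        apply hx
        simp only [Prod.mk.injEq] at he
        obtain ⟨rfl, rfl, rfl, rfl⟩ := he
        rw [hG]
        exact ⟨⟨h.symmA ω, h.looplessA ω⟩, ⟨h.symmY ω, h.looplessY ω⟩, ⟨h.symmY' ω, h.looplessY' ω⟩⟩
      rw [this, measure_empty]
  have h2 : ∑ x : Cfg n, P {ω | ((c ω, A ω, Y ω, Y' ω) : Cfg n) = x} =
      ∑ x ∈ G, ENNReal.ofReal (redMass B βm κ (red x)) := by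
    rw [← Finset.sum_subset (Finset.subset_univ G) (fun x _ hx => by rw [h1 x, if_neg hx])]
    exact Finset.sum_congr rfl fun x hx => by rw [h1 x, if_pos hx]
  rw [h2, ← ENNReal.ofReal_sum_of_nonneg fun x _ => redMass_nonneg hκ0 hκ1 hB hβ _]
  rw [ENNReal.ofReal_le_one, ← redMass_sum (n := n) B βm κ]
  have hinj : Set.InjOn (red (n := n)) G := by
    rintro ⟨l, a, y, y'⟩ hx ⟨l2, a2, y2, y2'⟩ hx2 he
    rw [Finset.mem_coe, hG] at hx hx2
    simp only [red, Prod.mk.injEq] at he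
    have hp : ∀ i j, i < j → a i j = a2 i j ∧ y i j = y2 i j ∧ y' i j = y2' i j := by
      intro i j hij
      have := congrFun he.2 ⟨(i, j), by simp [hij]⟩
      simpa using this
    simp only [Prod.mk.injEq]
    exact ⟨he.1, symL_ext hx.1 hx2.1 fun i j hij => (hp i j hij).1,
      symL_ext hx.2.1 hx2.2.1 fun i j hij => (hp i j hij).2.1,
      symL_ext hx.2.2 hx2.2.2 fun i j hij => (hp i j hij).2.2⟩
  rw [← Finset.sum_image (f := redMass B βm κ) hinj]
  exact Finset.sum_le_sum_of_subset_of_nonneg (Finset.subset_univ _) fun x _ _ => redMass_nonneg hκ0 hκ1 hB hβ _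

/-- With zero error rates, the two replicates agree almost surely. -/
lemma IsObsSBM.zero {Ω : Type*} [MeasurableSpace Ω] {P : Measure Ω} {n : ℕ}
    {B βm : Bool → Bool → ℝ} {κ : ℝ} {c : Ω → Fin n → Bool} {A Y Y' : Ω → Mat n}
    (h : IsObsSBM P n B βm κ c A Y Y') (hβ : ∀ x y, βm x y = 0) :
    P {ω | Y ω ≠ Y' ω} = 0 := by
  classical
  have hsub : {ω | Y ω ≠ Y' ω} ⊆ ⋃ x : Cfg n, {ω | Y ω ≠ Y' ω ∧ c ω = x.1 ∧ A ω = x.2.1 ∧ Y ω = x.2.2.1 ∧ Y' ω = x.2.2.2} := by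
    intro ω hω
    simp only [Set.mem_iUnion]
    exact ⟨(c ω, A ω, Y ω, Y' ω), hω, rfl, rfl, rfl, rfl⟩
  refine measure_mono_null hsub (measure_iUnion_null ?_)
  rintro ⟨l, a, y, y'⟩
  by_contra hne
  obtain ⟨ω, hω, rfl, rfl, rfl, rfl⟩ := nonempty_of_measure_ne_zero hne
  apply hne
  refine measure_mono_null (t := {ω' | c ω' = c ω ∧ A ω' = A ω ∧ Y ω' = Y ω ∧ Y' ω' = Y' ω}) (fun ω' hω' => hω'.2) ?_
  rw [h.law _ _ _ _ (h.symmA ω) (h.looplessA ω) (h.symmY ω) (h.looplessY ω) (h.symmY' ω) (h.looplessY' ω)]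
  have : ∃ i j, i < j ∧ Y ω i j ≠ Y' ω i j := by
    by_contra hc
    push Not at hc
    exact hω (symL_ext ⟨h.symmY ω, h.looplessY ω⟩ ⟨h.symmY' ω, h.looplessY' ω⟩ hc)
  obtain ⟨i, j, hij, hY⟩ := this
  rw [ENNReal.ofReal_eq_zero]
  apply le_of_eq
  have hmem : (i, j) ∈ (Finset.univ.filter (fun p : Fin n × Fin n => p.1 < p.2)) := by simp [hij]
  have hz : obsMass βm (c ω) (A ω) (Y ω) = 0 ∨ obsMass βm (c ω) (A ω) (Y' ω) = 0 := by
    unfold obsMass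
    cases hA : A ω i j <;> cases hy : Y ω i j <;> cases hy' : Y' ω i j <;> simp only [hy, hy', ne_eq, not_true_eq_false] at hY <;>
    first
    | (left; refine Finset.prod_eq_zero hmem ?_; simp [hA, hy, hβ]; done)
    | (right; refine Finset.prod_eq_zero hmem ?_; simp [hA, hy', hβ])
  rcases hz with hz | hz <;> simp [hz]

lemma cond_ge {Ω : Type*} [MeasurableSpace Ω] {P : Measure Ω} [IsProbabilityMeasure P] {S : Set Ω}
    (hS : NullMeasurableSet S P) (t : Set Ω) :
    P {ω | ω ∈ S ∧ ω ∈ t} ≤ ProbabilityTheory.cond P S t := by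
  rw [ProbabilityTheory.cond, Measure.smul_apply, Measure.restrict_apply₀' hS, smul_eq_mul]
  have h1 : 1 ≤ (P S)⁻¹ := ENNReal.one_le_inv.2 prob_le_one
  calc P {ω | ω ∈ S ∧ ω ∈ t} = 1 * P (t ∩ S) := by
        rw [one_mul]; congr 1; ext ω; simp [and_comm]
    _ ≤ _ := by gcongr

lemma final_step {Ω : ℕ → Type} [mΩ : ∀ n, MeasurableSpace (Ω n)] (P : ∀ n, Measure (Ω n))
    {E : ∀ n, Set (Ω n)} {α : ℝ} (hα : 0 < α)
    (h : ∀ ε > 0, ∀ᶠ n in atTop, P n (E n) ≤ ENNReal.ofReal (α + ε)) :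
    limsup (fun n => (P n (E n)).toReal) atTop ≤ α := by
  refine le_of_forall_pos_le_add fun ε hε => ?_
  refine limsup_le_of_le ?_ ?_
  · exact isCoboundedUnder_le_of_le atTop (x := 0) fun n => ENNReal.toReal_nonneg
  · filter_upwards [h ε hε] with n hn
    exact ENNReal.toReal_le_of_le_ofReal (by linarith) hn

theorem statement_17
    (κ q β βbar μ₁ μ₂ γ₁ γ₂ α : ℝ)
    (hκ0 : 0 < κ) (hκ1 : κ < 1) (hq0 : 0 < q) (hq1 : q < 1)
    (hβ0 : 0 ≤ β) (hβ1 : β < 1) (hβbar0 : 0 < βbar) (hβbar1 : βbar < 1)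
    (hα0 : 0 < α) (hα1 : α < 1)
    (Ω : ℕ → Type) [mΩ : ∀ n, MeasurableSpace (Ω n)] (P : ∀ n, Measure (Ω n))
    (c : ∀ n, Ω n → Fin n → Bool)
    (A Y Y' : ∀ n, Ω n → Fin n → Fin n → Bool)
    (hmodel : ∀ᶠ n : ℕ in atTop,
      IsObsSBM (P n) n
        (sbmB (q + μ₁ / Real.sqrt n) (q + μ₂ / Real.sqrt n) q)
        (sbmB (β - γ₁ / Real.sqrt n) (β - γ₂ / Real.sqrt n) β)
        κ (c n) (A n) (Y n) (Y' n))
    -- the estimated precision matrices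
    (Θβ : ∀ n, Ω n → Matrix (Fin 3) (Fin 3) ℝ)
    (Θμ : ∀ n, Ω n → Matrix (Fin 4) (Fin 4) ℝ)
    -- Σ_β: the positive definite limiting covariance of
    -- (n(β̂_b − β), √n(γ̂₁ − γ₁), √n(γ̂₂ − γ₂)) (valid when β ∈ (0,1), on the
    -- event Y ≠ Y*), with Θ̂_β a consistent estimator of Σ_β⁻¹
    (SigmaB : Matrix (Fin 3) (Fin 3) ℝ)
    (hSB : 0 < β → SigmaB.PosDef ∧
      (∀ t : Fin 3 → ℝ, t ≠ 0 → ∀ x : ℝ,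
        Tendsto (fun n =>
            ((ProbabilityTheory.cond (P n) {ω | Y n ω ≠ Y' n ω})
              {ω | ∑ k, t k * (statVec3 β (c n ω) (Y n ω) (Y' n ω) k -
                  ![0, Real.sqrt n * γ₁, Real.sqrt n * γ₂] k) ≤ x}).toReal)
          atTop
          (nhds ((gaussianReal 0
              (Real.toNNReal (∑ k, ∑ k', t k * SigmaB k k' * t k'))
              (Set.Iic x)).toReal))))
    (hΘβ : 0 < β → ∀ (k k' : Fin 3), ∀ ε > (0:ℝ),
      Tendsto (fun n =>
          (ProbabilityTheory.cond (P n) {ω | Y n ω ≠ Y' n ω})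
            {ω | ε < |Θβ n ω k k' - SigmaB⁻¹ k k'|})
        atTop (nhds 0))
    -- Σ_μ: the positive definite limiting covariance of
    -- √n(γ̂₁ − γ₁, γ̂₂ − γ₂, μ̂₁ − μ₁, μ̂₂ − μ₂) (valid when β ∈ (0,1), on the
    -- event Y ≠ Y*), with Θ̂_μ a consistent estimator of Σ_μ⁻¹
    (SigmaM : Matrix (Fin 4) (Fin 4) ℝ)
    (hSM : 0 < β → SigmaM.PosDef ∧
      (∀ t : Fin 4 → ℝ, t ≠ 0 → ∀ x : ℝ,
        Tendsto (fun n =>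
            ((ProbabilityTheory.cond (P n) {ω | Y n ω ≠ Y' n ω})
              {ω | ∑ k, t k * (Real.sqrt n *
                  (estVec4 (c n ω) (Y n ω) (Y' n ω) k -
                    ![γ₁, γ₂, μ₁, μ₂] k)) ≤ x}).toReal)
          atTop
          (nhds ((gaussianReal 0
              (Real.toNNReal (∑ k, ∑ k', t k * SigmaM k k' * t k'))
              (Set.Iic x)).toReal))))
    (hΘμ : 0 < β → ∀ (k k' : Fin 4), ∀ ε > (0:ℝ),
      Tendsto (fun n =>
          (ProbabilityTheory.cond (P n) {ω | Y n ω ≠ Y' n ω})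
            {ω | ε < |Θμ n ω k k' - SigmaM⁻¹ k k'|})
        atTop (nhds 0))
    -- the (1−α)-quantiles of χ²(3) and χ²(4)
    (c3 c4 : ℝ)
    (hc3 : (chiSqMeasure 3 (Set.Iic c3)).toReal = 1 - α)
    (hc4 : (chiSqMeasure 4 (Set.Iic c4)).toReal = 1 - α)
    -- the null hypothesis H₀,β̄
    (hnull : (γ₁ = 0 ∧ γ₂ = 0 ∧ 0 ≤ β ∧ β ≤ βbar) ∨
             (γ₁ = 0 ∧ γ₂ = 0 ∧ μ₁ = 0 ∧ μ₂ = 0)) :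
    -- asymptotic type I error control at level α
    Filter.limsup (fun n =>
        (P n {ω | Y n ω ≠ Y' n ω ∧
          c3 < sInf ((fun b => Qbeta b (c n ω) (Y n ω) (Y' n ω) (Θβ n ω)) ''
            Set.Icc (0:ℝ) βbar) ∧
          c4 < Qmu (c n ω) (Y n ω) (Y' n ω) (Θμ n ω)}).toReal)
      atTop ≤ α := by
  obtain ⟨h1, h2⟩ : γ₁ = 0 ∧ γ₂ = 0 := by
    rcases hnull with h | h <;> exact ⟨h.1, h.2.1⟩
  subst h1 h2
  refine final_step P hα0 ?_
  intro ε hε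
  -- the parameters are eventually probabilities
  have hβm : ∀ n : ℕ, ∀ x y, sbmB (β - 0 / Real.sqrt n) (β - 0 / Real.sqrt n) β x y = β := by
    intro n x y
    cases x <;> cases y <;> simp [sbmB]
  have hlimB : ∀ μ : ℝ, ∀ᶠ n : ℕ in atTop, 0 ≤ q + μ / Real.sqrt n ∧ q + μ / Real.sqrt n ≤ 1 := by
    intro μ
    have h1 : Tendsto (fun n : ℕ => q + μ / Real.sqrt n) atTop (nhds (q + 0)) :=
      Tendsto.const_add _ (Tendsto.div_atTop tendsto_const_nhds
        (Real.tendsto_sqrt_atTop.comp tendsto_natCast_atTop_atTop))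
    rw [add_zero] at h1
    filter_upwards [h1.eventually_const_lt hq0, h1.eventually_lt_const hq1] with n ha hb using ⟨ha.le, hb.le⟩
  rcases hβ0.eq_or_lt with hβ | hβ
  · filter_upwards [hmodel] with n hn
    have := hn.zero (fun x y => (hβm n x y).trans hβ.symm)
    rw [measure_mono_null (fun ω hω => hω.1) this]
    exact bot_le
  have hnm : ∀ᶠ n : ℕ in atTop, ∀ T : Set (Cfg n),
      NullMeasurableSet {ω | (c n ω, A n ω, Y n ω, Y' n ω) ∈ T} (P n) := by
    filter_upwards [hmodel, hlimB μ₁, hlimB μ₂] with n hn hb1 hb2 T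
    refine hn.nullMeas hκ0.le hκ1.le ?_ ?_ T
    · intro x y
      cases x <;> cases y <;> simp [sbmB, hb1, hb2, hq0.le, hq1.le]
    · intro x y
      rw [hβm]
      exact ⟨hβ0, hβ1.le⟩
  have hP : ∀ᶠ n : ℕ in atTop, IsProbabilityMeasure (P n) := hmodel.mono fun n hn => hn.isProb
  have hS : ∀ᶠ n : ℕ in atTop, NullMeasurableSet {ω | Y n ω ≠ Y' n ω} (P n) :=
    hnm.mono fun n hn => hn {x | x.2.2.1 ≠ x.2.2.2}
  have hm0 : ∀ᶠ n : ℕ in atTop, ProbabilityTheory.cond (P n) {ω | Y n ω ≠ Y' n ω} = 0 ∨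
      IsProbabilityMeasure (ProbabilityTheory.cond (P n) {ω | Y n ω ≠ Y' n ω}) := by
    filter_upwards [hP] with n hn
    by_cases h0 : P n {ω | Y n ω ≠ Y' n ω} = 0
    · left; exact cond_eq_zero_of_meas_eq_zero h0
    · right; exact cond_isProbabilityMeasure h0
  have hae : ∀ (d : ℕ) (g : ∀ n, (Fin n → Bool) → Mat n → Mat n → Fin d → ℝ), ∀ᶠ n : ℕ in atTop,
      AEMeasurable (fun ω => g n (c n ω) (Y n ω) (Y' n ω))
        (ProbabilityTheory.cond (P n) {ω | Y n ω ≠ Y' n ω}) := by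
    intro d g
    filter_upwards [hnm] with n hn
    have h1 : NullMeasurable (fun ω => g n (c n ω) (Y n ω) (Y' n ω)) (P n) :=
      fun s _ => hn {x | g n x.1 x.2.2.1 x.2.2.2 ∈ s}
    exact h1.aemeasurable.mono_ac cond_absolutelyContinuous
  by_cases hcase : β ≤ βbar
  · obtain ⟨hpd, hcw⟩ := hSB hβ
    have hcore := core Ω (fun n => ProbabilityTheory.cond (P n) {ω | Y n ω ≠ Y' n ω})
      (fun n ω => statVec3 β (c n ω) (Y n ω) (Y' n ω)) Θβ SigmaB hpd hm0
      (hae 3 fun n c y y' => statVec3 β c y y')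
      (by
        intro t ht x
        convert hcw t ht x using 9 with n ω k
        fin_cases k <;> simp)
      (hΘβ hβ) c3 α (by exact_mod_cast hc3) ε hε
    filter_upwards [hcore, hS, hP] with n hn hSn hPn
    refine le_trans (le_trans (measure_mono ?_) (cond_ge hSn _)) hn
    rintro ω ⟨h1, h2, -⟩
    refine ⟨h1, ?_⟩
    refine lt_of_lt_of_le h2 (csInf_le ?_ ⟨β, ⟨hβ0, hcase⟩, rfl⟩)
    refine (isCompact_Icc.image_of_continuousOn (Continuous.continuousOn ?_)).bddBelow
    simp only [Qbeta, Fin.sum_univ_three, statVec3]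
    simp
    fun_prop
  · obtain ⟨h1, h2⟩ : μ₁ = 0 ∧ μ₂ = 0 := by
      rcases hnull with h | h
      · exact absurd h.2.2.2 hcase
      · exact h.2.2
    subst h1 h2
    obtain ⟨hpd, hcw⟩ := hSM hβ
    have hcore := core Ω (fun n => ProbabilityTheory.cond (P n) {ω | Y n ω ≠ Y' n ω})
      (fun n ω k => Real.sqrt n * estVec4 (c n ω) (Y n ω) (Y' n ω) k) Θμ SigmaM hpd hm0
      (hae 4 fun n c y y' k => Real.sqrt n * estVec4 c y y' k)
      (by
        intro t ht x
        convert hcw t ht x using 10 with n ω k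
        fin_cases k <;> simp)
      (hΘμ hβ) c4 α (by exact_mod_cast hc4) ε hε
    filter_upwards [hcore, hS, hP] with n hn hSn hPn
    refine le_trans (le_trans (measure_mono ?_) (cond_ge hSn _)) hn
    rintro ω ⟨h1, -, h2⟩
    refine ⟨h1, ?_⟩
    refine lt_of_lt_of_eq h2 ?_
    rw [Qmu, Finset.mul_sum]
    refine Finset.sum_congr rfl fun k _ => ?_
    rw [Finset.mul_sum]
    refine Finset.sum_congr rfl fun k' _ => ?_
    have := Real.mul_self_sqrt (Nat.cast_nonneg (α := ℝ) n)
    nth_rewrite 1 [← this]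
    ring

end
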